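/- arXiv:1308.3316 — 6 statements merged into one kernel-verified Lean document; each statement's English description precedes it below -/
import Mathlib

section
/- Let G be a finite abelian group and let m_1, …, m_t be positive integers such that G is isomorphic to the direct sum C_{m_1} ⊕ ⋯ ⊕ C_{m_t} of cyclic groups of those orders. Then ∑_{i=1}^t ⌊log₂ m_i⌋ + 1 ≤ D_±(G) ≤ ⌊∑_{i=1}^t log₂ m_i⌋ + 1 = ⌊log₂ |G|⌋ + 1. -/
open Finset

/-- A sequence `g` over `G` has an `A`-weighted zero-subsum: there is a nonempty
index set `I` and weights `a i ∈ A` for `i ∈ I` with `∑ i ∈ I, a i • g i = 0`. -/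
def HasWZS (A : Set ℤ) {G : Type*} [AddCommGroup G] {ℓ : ℕ} (g : Fin ℓ → G) : Prop :=
  ∃ (I : Finset (Fin ℓ)) (a : Fin ℓ → ℤ), I.Nonempty ∧ (∀ i ∈ I, a i ∈ A) ∧
    ∑ i ∈ I, a i • g i = 0

/-- The `A`-weighted Davenport constant of `G`: the smallest `ℓ` such that every
sequence of length `ℓ` over `G` has an `A`-weighted zero-subsum. -/
noncomputable def DavW (A : Set ℤ) (G : Type*) [AddCommGroup G] : ℕ :=
  sInf {ℓ : ℕ | ∀ g : Fin ℓ → G, HasWZS A g}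

/-- The plus-minus weighted Davenport constant. -/
noncomputable def Davpm (G : Type*) [AddCommGroup G] : ℕ :=
  DavW ({1, -1} : Set ℤ) G

/-!
Call a family `g` in an abelian group `b`-dissociated if `∑ i, c i • g i = 0` with integers
`|c i| < b` forces `c = 0`. For `b = 2` the coefficients are `0` and `±1`, so `D_±(G)` is the least
length at which no sequence over `G` is `2`-dissociated. The argument works for every `b ≥ 2`.

Upper bound: two sums with digits in `{0, …, b - 1}` differ by a sum with coefficients of absolute
value less than `b`, so for a `b`-dissociated family of length `ℓ` these `b ^ ℓ` sums are distinct
and `b ^ ℓ ≤ |G|`.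

Lower bound: `1, b, …, b ^ (k - 1)` is `b`-dissociated in `ℤ`, and also in `ℤ/m` when `b ^ k ≤ m`,
since the sums in question are smaller than `b ^ k` in absolute value. Placing such families in the
coordinates of a direct sum gives a `b`-dissociated family of length `∑ i, ⌊log_b m_i⌋`.
-/

/-- The weights `±1, …, ±(b - 1)`; for `b = 2` these are the plus-minus weights. -/
def boundedWeights (b : ℕ) : Set ℤ :=
  {a | a ≠ 0 ∧ |a| < b}

/-- `b`-dissociated families: the sequences without zero-subsums for the weights
`boundedWeights b`, the terms left out of a subsum being encoded by the coefficient `0`. -/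
def IsDissociated (b : ℕ) {ι G : Type*} [Fintype ι] [AddCommGroup G] (g : ι → G) : Prop :=
  ∀ c : ι → ℤ, (∀ i, |c i| < b) → ∑ i, c i • g i = 0 → c = 0

theorem boundedWeights_two : boundedWeights 2 = {1, -1} := by
  ext a
  simp only [boundedWeights, Set.mem_ofPred_eq, Set.mem_insert_iff, Set.mem_singleton_iff, abs_lt]
  omega

section Dissociated

variable {b : ℕ} {ι κ G H : Type*} [Fintype ι] [Fintype κ] [AddCommGroup G] [AddCommGroup H]

namespace IsDissociated

theorem comp_injective {g : ι → G} (hg : IsDissociated b g) {f : κ → ι}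
    (hf : Function.Injective f) : IsDissociated b (g ∘ f) := by
  intro c hc hsum
  funext k₀
  let c' : ι → ℤ := Function.extend f c fun _ ↦ 0
  have hc'_apply (k : κ) : c' (f k) = c k := hf.extend_apply c _ k
  have hc'_notMem (i : ι) (hi : i ∉ Set.range f) : c' i = 0 := Function.extend_apply' c _ i hi
  have hc'_lt (i : ι) : |c' i| < b := by
    by_cases hi : i ∈ Set.range f
    · obtain ⟨k, rfl⟩ := hi
      simpa only [hc'_apply] using hc k
    · simpa only [hc'_notMem i hi, abs_zero] using (abs_nonneg _).trans_lt (hc k₀)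
  have hc'_sum : ∑ i, c' i • g i = 0 := by
    rw [← hsum]
    refine (Fintype.sum_of_injective f hf _ _ (fun i hi ↦ ?_) fun k ↦ ?_).symm
    · rw [hc'_notMem i hi, zero_smul]
    · rw [hc'_apply, Function.comp_apply]
  rw [← hc'_apply, hg c' hc'_lt hc'_sum, Pi.zero_apply, Pi.zero_apply]

theorem map {g : ι → G} (hg : IsDissociated b g) {φ : G →+ H} (hφ : Function.Injective φ) :
    IsDissociated b (φ ∘ g) := by
  intro c hc hsum
  refine hg c hc (hφ ?_)
  simpa only [map_sum, map_zsmul, map_zero, Function.comp_apply] using hsum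

theorem piSingle [DecidableEq ι] {α M : ι → Type*} [∀ i, Fintype (α i)]
    [∀ i, AddCommGroup (M i)] {g : ∀ i, α i → M i} (hg : ∀ i, IsDissociated b (g i)) :
    IsDissociated b fun x : Σ i, α i ↦ (Pi.single x.1 (g x.1 x.2) : ∀ i, M i) := by
  intro c hc hsum
  have hcoord (i : ι) : ∑ j, c ⟨i, j⟩ • g i j = 0 := by
    have := congrFun hsum i
    simp only [Fintype.sum_sigma, Finset.sum_apply, Pi.smul_apply, Pi.zero_apply] at this
    rwa [Fintype.sum_eq_single i fun i' hi' ↦ by simp [Pi.single_eq_of_ne hi'.symm],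
      sum_congr rfl fun j _ ↦ by rw [Pi.single_eq_same]] at this
  funext ⟨i, j⟩
  exact congrFun (hg i (fun j ↦ c ⟨i, j⟩) (fun j ↦ hc ⟨i, j⟩) (hcoord i)) j

theorem injective_sum_digits {g : ι → G} (hg : IsDissociated b g) :
    Function.Injective fun d : ι → Fin b ↦ ∑ i, (d i : ℕ) • g i := by
  intro d d' hdd'
  have hzero := hg (fun i ↦ (d i : ℤ) - (d' i : ℤ)) (fun i ↦ by rw [abs_lt]; omega)
    (by simpa only [sub_smul, sum_sub_distrib, natCast_zsmul, sub_eq_zero] using hdd')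
  funext i
  have := congrFun hzero i
  simp only [Pi.zero_apply] at this
  omega

theorem pow_card_le [Finite G] {g : ι → G} (hg : IsDissociated b g) :
    b ^ Fintype.card ι ≤ Nat.card G := by
  simpa [Nat.card_fun] using Nat.card_le_card_of_injective _ hg.injective_sum_digits

end IsDissociated

theorem hasWZS_boundedWeights_iff {ℓ : ℕ} {g : Fin ℓ → G} :
    HasWZS (boundedWeights b) g ↔ ¬ IsDissociated b g := by
  simp only [IsDissociated, not_forall]
  constructor
  · rintro ⟨I, a, ⟨i₀, hi₀⟩, ha, hsum⟩
    have hb : (0 : ℤ) < b := (abs_nonneg _).trans_lt (ha i₀ hi₀).2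
    refine ⟨fun i ↦ if i ∈ I then a i else 0, fun i ↦ ?_, ?_, fun h ↦ (ha i₀ hi₀).1 ?_⟩
    · dsimp only
      split_ifs with hi
      · exact (ha i hi).2
      · rwa [abs_zero]
    · simpa only [ite_smul, zero_smul, sum_ite_mem, univ_inter] using hsum
    · simpa only [hi₀, if_true, Pi.zero_apply] using congrFun h i₀
  · rintro ⟨c, hc, hsum, hne⟩
    refine ⟨({i | c i ≠ 0} : Finset (Fin ℓ)), c, ?_, fun i hi ↦ ⟨(mem_filter.1 hi).2, hc i⟩, ?_⟩
    · obtain ⟨i, hi⟩ := Function.ne_iff.1 hne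
      exact ⟨i, mem_filter.2 ⟨mem_univ i, hi⟩⟩
    · rwa [sum_filter_of_ne fun i _ hi ↦ left_ne_zero_of_smul hi]

variable [Finite G]

theorem hasWZS_of_card_lt_pow {ℓ : ℕ} (hℓ : Nat.card G < b ^ ℓ) (g : Fin ℓ → G) :
    HasWZS (boundedWeights b) g :=
  hasWZS_boundedWeights_iff.2 fun hg ↦ hℓ.not_ge (by simpa using hg.pow_card_le)

theorem davW_boundedWeights_le_log_card_add_one (hb : 1 < b) :
    DavW (boundedWeights b) G ≤ Nat.log b (Nat.card G) + 1 :=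
  Nat.sInf_le (hasWZS_of_card_lt_pow (Nat.lt_pow_succ_log_self hb _))

theorem hasWZS_davW_boundedWeights (hb : 1 < b) (g : Fin (DavW (boundedWeights b) G) → G) :
    HasWZS (boundedWeights b) g :=
  Nat.sInf_mem (s := {ℓ | ∀ g : Fin ℓ → G, HasWZS (boundedWeights b) g})
    ⟨_, hasWZS_of_card_lt_pow (Nat.lt_pow_succ_log_self hb _)⟩ g

theorem IsDissociated.card_lt_davW (hb : 1 < b) {g : ι → G} (hg : IsDissociated b g) :
    Fintype.card ι < DavW (boundedWeights b) G := by
  by_contra! hle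
  obtain ⟨f⟩ : Nonempty (Fin (DavW (boundedWeights b) G) ↪ ι) :=
    Function.Embedding.nonempty_of_card_le (by simpa using hle)
  exact hasWZS_boundedWeights_iff.1 (hasWZS_davW_boundedWeights hb _)
    (hg.comp_injective f.injective)

end Dissociated

section Powers

variable {b k : ℕ}

theorem abs_sum_mul_pow_lt {c : Fin k → ℤ} (hc : ∀ j, |c j| < b) :
    |∑ j, c j * (b : ℤ) ^ (j : ℕ)| < (b : ℤ) ^ k :=
  calc |∑ j, c j * (b : ℤ) ^ (j : ℕ)|
      ≤ ∑ j, |c j * (b : ℤ) ^ (j : ℕ)| := abs_sum_le_sum_abs _ _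
    _ ≤ ∑ j : Fin k, ((b : ℤ) - 1) * (b : ℤ) ^ (j : ℕ) := by
        refine sum_le_sum fun j _ ↦ ?_
        rw [abs_mul, abs_of_nonneg (by positivity : (0 : ℤ) ≤ (b : ℤ) ^ (j : ℕ))]
        gcongr
        exact Int.le_sub_one_of_lt (hc j)
    _ = (b : ℤ) ^ k - 1 := by
        rw [← mul_sum, Fin.sum_univ_eq_sum_range fun j ↦ (b : ℤ) ^ j, mul_geom_sum]
    _ < (b : ℤ) ^ k := sub_one_lt _

theorem isDissociated_int_pow (b k : ℕ) :
    IsDissociated b fun j : Fin k ↦ (b : ℤ) ^ (j : ℕ) := by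
  induction k with
  | zero => exact fun c _ _ ↦ Subsingleton.elim c 0
  | succ k ih =>
    intro c hc hsum
    have hsplit : c 0 + b * ∑ j : Fin k, c j.succ * (b : ℤ) ^ (j : ℕ) = 0 := by
      rw [← hsum, Fin.sum_univ_succ, mul_sum]
      simp [pow_succ', mul_left_comm]
    have hc0 : c 0 = 0 :=
      Int.eq_zero_of_abs_lt_dvd ((dvd_add_left (dvd_mul_right _ _)).1 (hsplit ▸ dvd_zero _)) (hc 0)
    have hb : (b : ℤ) ≠ 0 := ((abs_nonneg _).trans_lt (hc 0)).ne'
    have htail_sum : ∑ j : Fin k, c j.succ * (b : ℤ) ^ (j : ℕ) = 0 := by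
      simpa only [hc0, zero_add, mul_eq_zero, hb, false_or] using hsplit
    have htail : (fun j : Fin k ↦ c j.succ) = 0 := ih _ (fun j ↦ hc j.succ) htail_sum
    funext j
    exact Fin.cases hc0 (congrFun htail) j

theorem isDissociated_zmod_pow {m : ℕ} (hm : b ^ k ≤ m) :
    IsDissociated b fun j : Fin k ↦ (b : ZMod m) ^ (j : ℕ) := by
  intro c hc hsum
  have hdvd : (m : ℤ) ∣ ∑ j, c j * (b : ℤ) ^ (j : ℕ) := by
    rw [← ZMod.intCast_zmod_eq_zero_iff_dvd]
    simpa using hsum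
  have hlt : |∑ j, c j * (b : ℤ) ^ (j : ℕ)| < m :=
    (abs_sum_mul_pow_lt hc).trans_le (mod_cast hm)
  exact isDissociated_int_pow b k c hc (Int.eq_zero_of_abs_lt_dvd hdvd hlt)

end Powers

theorem floor_logb_natCast (b n : ℕ) : ⌊Real.logb b n⌋ = (Nat.log b n : ℤ) := by
  rw [Real.floor_logb_natCast n.cast_nonneg, Int.log_natCast]

theorem natCard_eq_prod {G ι : Type*} [Fintype ι] {m : ι → ℕ} (e : G ≃ ∀ i, ZMod (m i)) :
    Nat.card G = ∏ i, m i := by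
  simp [Nat.card_congr e, Nat.card_pi]

theorem stmt0_general {G ι : Type*} [AddCommGroup G] [Fintype ι] {m : ι → ℕ}
    (hm : ∀ i, 0 < m i) (e : G ≃+ ∀ i, ZMod (m i)) {b : ℕ} (hb : 1 < b) :
    (∑ i, ⌊Real.logb b (m i)⌋) + 1 ≤ (DavW (boundedWeights b) G : ℤ) ∧
    (DavW (boundedWeights b) G : ℤ) ≤ ⌊∑ i, Real.logb b (m i)⌋ + 1 ∧
    ⌊∑ i, Real.logb b (m i)⌋ = ⌊Real.logb b (Nat.card G)⌋ := by
  classical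
  have hcard : Nat.card G = ∏ i, m i := natCard_eq_prod e.toEquiv
  have hsum : ∑ i, Real.logb b (m i) = Real.logb b (Nat.card G) := by
    rw [hcard, Nat.cast_prod, Real.logb_prod _ _ fun i _ ↦ Nat.cast_ne_zero.2 (hm i).ne']
  have : Finite G := Nat.finite_of_card_ne_zero (hcard ▸ (prod_pos fun i _ ↦ hm i).ne')
  have hpowers : IsDissociated b fun x : Σ i, Fin (Nat.log b (m i)) ↦
      (Pi.single x.1 ((b : ZMod (m x.1)) ^ (x.2 : ℕ)) : ∀ i, ZMod (m i)) :=
    .piSingle fun i ↦ isDissociated_zmod_pow (Nat.pow_log_le_self b (hm i).ne')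
  have hlower := (hpowers.map (φ := e.symm.toAddMonoidHom) e.symm.injective).card_lt_davW hb
  have hupper := davW_boundedWeights_le_log_card_add_one (G := G) hb
  simp only [Fintype.card_sigma, Fintype.card_fin] at hlower
  refine ⟨?_, ?_, by rw [hsum]⟩
  · simp only [floor_logb_natCast]
    exact_mod_cast hlower
  · rw [hsum, floor_logb_natCast]
    exact_mod_cast hupper

theorem stmt0 (G : Type) [AddCommGroup G] [Fintype G] (t : ℕ) (m : Fin t → ℕ)
    (hm : ∀ i, 0 < m i) (e : G ≃+ (∀ i, ZMod (m i))) :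
    (∑ i, ⌊Real.logb 2 (m i)⌋) + 1 ≤ (Davpm G : ℤ) ∧
    (Davpm G : ℤ) ≤ ⌊∑ i, Real.logb 2 (m i)⌋ + 1 ∧
    ⌊∑ i, Real.logb 2 (m i)⌋ = ⌊Real.logb 2 (Fintype.card G)⌋ := by
  simpa [Davpm, boundedWeights_two] using stmt0_general hm e one_lt_two
end

section
/- Let G be a finite abelian group with exponent n, let A ⊆ ℤ be a nonempty set, and let d be a positive divisor of n. Then D_{dA}(G) = D_A(dG), where dA = {da : a ∈ A} and dG = {dg : g ∈ G} is the subgroup of G consisting of all d-th multiples. -/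
open Finset

/-- The additive homomorphism `g ↦ d • g`; its range is the subgroup `dG`. -/
def scalarHom (d : ℕ) (G : Type*) [AddCommGroup G] : G →+ G :=
  AddMonoidHom.mk' (fun g => d • g) (fun a b => smul_add d a b)

section

variable {A : Set ℤ} {G H : Type*} [AddCommGroup G] [AddCommGroup H] {ℓ : ℕ}

theorem hasWZS_image_mul_left_iff (d : ℤ) (g : Fin ℓ → G) :
    HasWZS ((fun a => d * a) '' A) g ↔ HasWZS A (d • g) := by
  constructor
  · rintro ⟨I, a, hI, ha, hsum⟩
    choose! b hbA hba using ha
    refine ⟨I, b, hI, hbA, ?_⟩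
    calc ∑ i ∈ I, b i • (d • g) i
      _ = ∑ i ∈ I, a i • g i :=
        Finset.sum_congr rfl fun i hi => by rw [← hba i hi, mul_zsmul', Pi.smul_apply]
      _ = 0 := hsum
  · rintro ⟨I, b, hI, hbA, hsum⟩
    refine ⟨I, fun i => d * b i, hI, fun i hi => Set.mem_image_of_mem _ (hbA i hi), ?_⟩
    simpa only [mul_zsmul', Pi.smul_apply] using hsum

theorem hasWZS_comp_iff_of_injective {f : G →+ H} (hf : Function.Injective f)
    (g : Fin ℓ → G) : HasWZS A (f ∘ g) ↔ HasWZS A g := by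
  simp only [HasWZS, Function.comp_apply, ← map_zsmul, ← map_sum, map_eq_zero_iff f hf]

theorem forall_hasWZS_range_iff (f : G →+ H) :
    (∀ h : Fin ℓ → f.range, HasWZS A h) ↔ ∀ g : Fin ℓ → G, HasWZS A (f ∘ g) :=
  f.rangeRestrict_surjective.comp_left.forall.trans <| forall_congr' fun g =>
    (hasWZS_comp_iff_of_injective f.range.subtype_injective (f.rangeRestrict ∘ g)).symm

theorem scalarHom_comp_eq_zsmul (d : ℕ) (g : Fin ℓ → G) :
    scalarHom d G ∘ g = (d : ℤ) • g :=
  (natCast_zsmul g d).symm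

theorem forall_hasWZS_image_mul_left_iff_range (d : ℕ) :
    (∀ g : Fin ℓ → G, HasWZS ((fun a => (d : ℤ) * a) '' A) g) ↔
      ∀ h : Fin ℓ → (scalarHom d G).range, HasWZS A h := by
  simp only [hasWZS_image_mul_left_iff, forall_hasWZS_range_iff, scalarHom_comp_eq_zsmul]

end

theorem stmt1_general (G : Type*) [AddCommGroup G] (A : Set ℤ) (_hA : A.Nonempty) (d : ℕ) :
    DavW ((fun a => (d : ℤ) * a) '' A) G = DavW A (scalarHom d G).range := by
  simp only [DavW, forall_hasWZS_image_mul_left_iff_range]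

theorem stmt1 (G : Type) [AddCommGroup G] [Fintype G] (A : Set ℤ) (hA : A.Nonempty)
    (d : ℕ) (hd0 : 0 < d) (hd : d ∣ AddMonoid.exponent G) :
    DavW ((fun a => (d : ℤ) * a) '' A) G = DavW A (↥(scalarHom d G).range) :=
  stmt1_general G A hA d
end

section
/- Let G be a finite abelian group, let H ≤ G be a subgroup, and let A ⊆ ℤ be a nonempty set. Then D_A(G) ≥ D_A(G/H) + D_A(H) − 1. -/
open Finset

/-! Lift a longest zero-subsum-free sequence of `G ⧸ H` to `G` and append a longest
zero-subsum-free sequence of `H`. A zero-subsum of the result projects to one in `G ⧸ H`, so it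
cannot use any lifted term; hence it lies entirely in `H`, which is impossible as well. So
`(D_A(G ⧸ H) - 1) + (D_A(H) - 1) < D_A(G)`. -/

namespace HasWZS

variable {A : Set ℤ} {G : Type*} [AddCommGroup G] {k ℓ : ℕ} {g : Fin ℓ → G}

theorem length_pos (h : HasWZS A g) : 0 < ℓ := by
  obtain ⟨I, -, ⟨i, -⟩, -⟩ := h
  exact i.pos

theorem of_comp_embedding (e : Fin k ↪ Fin ℓ) (h : HasWZS A (g ∘ e)) : HasWZS A g := by
  obtain ⟨I, a, hI, ha, hsum⟩ := h
  have extend_apply := e.injective.extend_apply a 0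
  refine ⟨I.map e, Function.extend e a 0, hI.map, ?_, ?_⟩
  · simpa only [forall_mem_map, extend_apply] using ha
  · simpa only [sum_map, extend_apply, Function.comp_apply] using hsum

theorem of_map_injective {K : Type*} [AddCommGroup K] {f : G →+ K} (hf : Function.Injective f)
    (h : HasWZS A (f ∘ g)) : HasWZS A g := by
  obtain ⟨I, a, hI, ha, hsum⟩ := h
  refine ⟨I, a, hI, ha, hf ?_⟩
  simpa only [map_sum, map_zsmul, map_zero, Function.comp_apply] using hsum

theorem of_card_le [Finite G] (hA : A.Nonempty) (g : Fin ℓ → G) (hℓ : Nat.card G ≤ ℓ) :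
    HasWZS A g := by
  have := Fintype.ofFinite G
  obtain ⟨c, hc⟩ := hA
  let initial (k : Fin (ℓ + 1)) : Finset (Fin ℓ) := {i | i.castSucc < k}
  let partialSum (k : Fin (ℓ + 1)) : G := ∑ i ∈ initial k, c • g i
  obtain ⟨x, y, hne, heq⟩ : ∃ x y, x ≠ y ∧ partialSum x = partialSum y :=
    Fintype.exists_ne_map_eq_of_card_lt partialSum <| by
      rw [Fintype.card_fin, ← Nat.card_eq_fintype_card]
      exact Nat.lt_succ_of_le hℓ
  wlog hxy : x < y generalizing x y
  · exact this y x hne.symm heq.symm (hne.lt_or_gt.resolve_left hxy)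
  have hsub : initial x ⊆ initial y := fun i hi => by
    simp only [initial, mem_filter_univ] at hi ⊢
    exact hi.trans hxy
  refine ⟨initial y \ initial x, fun _ => c, ?_, fun _ _ => hc, ?_⟩
  · exact ⟨x.castPred (Fin.ne_last_of_lt hxy), by simp [initial, hxy]⟩
  · rw [sum_sdiff_eq_sub hsub]
    exact sub_eq_zero.2 heq.symm

end HasWZS

theorem sum_eq_sum_castAdd_add_sum_natAdd {M : Type*} [AddCommMonoid M] {m n : ℕ}
    (I : Finset (Fin (m + n))) (f : Fin (m + n) → M) :
    ∑ i ∈ I, f i = ∑ i with Fin.castAdd n i ∈ I, f (Fin.castAdd n i) +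
      ∑ j with Fin.natAdd m j ∈ I, f (Fin.natAdd m j) := by
  rw [sum_filter, sum_filter, ← Fin.sum_univ_add fun i => if i ∈ I then f i else 0,
    sum_ite_mem, univ_inter]

theorem not_hasWZS_append {A : Set ℤ} {G K : Type*} [AddCommGroup G] [AddCommGroup K]
    (φ : G →+ K) {m n : ℕ} {g : Fin m → G} {h : Fin n → G} (hφ : ∀ j, φ (h j) = 0)
    (hg : ¬ HasWZS A (φ ∘ g)) (hh : ¬ HasWZS A h) : ¬ HasWZS A (Fin.append g h) := by
  rintro ⟨I, a, hI, ha, hsum⟩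
  simp only [sum_eq_sum_castAdd_add_sum_natAdd, Fin.append_left, Fin.append_right] at hsum
  have left_notMem (i : Fin m) : Fin.castAdd n i ∉ I := by
    intro hi
    refine hg ⟨_, a ∘ Fin.castAdd n, ⟨i, (mem_filter_univ i).2 hi⟩,
      fun j hj => ha _ ((mem_filter_univ j).1 hj), ?_⟩
    simpa [hφ] using congrArg φ hsum
  refine hh ⟨_, a ∘ Fin.natAdd m, ?_, fun j hj => ha _ ((mem_filter_univ j).1 hj), ?_⟩
  · obtain ⟨i, hi⟩ := hI
    induction i using Fin.addCases with
    | left i => exact absurd hi (left_notMem i)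
    | right j => exact ⟨j, (mem_filter_univ j).2 hi⟩
  · simpa [left_notMem] using hsum

-- If no length forces a zero-subsum, then `DavW A G = 0` and the witness is the empty sequence.
theorem exists_not_hasWZS (A : Set ℤ) (G : Type*) [AddCommGroup G] :
    ∃ g : Fin (DavW A G - 1) → G, ¬ HasWZS A g := by
  by_contra! h
  have hle : DavW A G ≤ DavW A G - 1 := Nat.sInf_le h
  have hpos : 0 < DavW A G - 1 := (h 0).length_pos
  omega

theorem length_lt_davW {A : Set ℤ} {G : Type*} [AddCommGroup G]
    (hG : ∃ ℓ, ∀ g : Fin ℓ → G, HasWZS A g) {ℓ : ℕ} {g : Fin ℓ → G} (hg : ¬ HasWZS A g) :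
    ℓ < DavW A G := by
  by_contra! hle
  have hDavW : ∀ g : Fin (DavW A G) → G, HasWZS A g := Nat.sInf_mem hG
  exact hg ((hDavW _).of_comp_embedding (Fin.castLEEmb hle))

-- A length that works for `G` also works for `H` and `G ⧸ H`, so none of the three constants is
-- the junk value `sInf ∅ = 0`.
theorem stmt3_general {G : Type*} [AddCommGroup G] {A : Set ℤ}
    (hG : ∃ ℓ, ∀ g : Fin ℓ → G, HasWZS A g) (H : AddSubgroup G) :
    (DavW A (G ⧸ H) : ℤ) + (DavW A H : ℤ) - 1 ≤ (DavW A G : ℤ) := by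
  obtain ⟨q, hq⟩ := exists_not_hasWZS A (G ⧸ H)
  obtain ⟨h, hh⟩ := exists_not_hasWZS A H
  obtain ⟨g, rfl⟩ := (QuotientAddGroup.mk'_surjective H).comp_left q
  have hh' : ¬ HasWZS A (H.subtype ∘ h) := fun hw => hh (hw.of_map_injective H.subtype_injective)
  have happend : ¬ HasWZS A (Fin.append g (H.subtype ∘ h)) :=
    not_hasWZS_append (QuotientAddGroup.mk' H) (by simp) hq hh'
  have hlt := length_lt_davW hG happend
  omega

theorem stmt3 (G : Type) [AddCommGroup G] [Fintype G] (A : Set ℤ) (hA : A.Nonempty)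
    (H : AddSubgroup G) :
    (DavW A (G ⧸ H) : ℤ) + (DavW A ↥H : ℤ) - 1 ≤ (DavW A G : ℤ) :=
  stmt3_general ⟨Nat.card G, fun g => .of_card_le hA g le_rfl⟩ H
end

section
/- Let H_1, H_2 be finite abelian groups such that D_±(H_i) = ⌊log₂ |H_i|⌋ + 1 for i = 1, 2 and such that {log₂ |H_1|} + {log₂ |H_2|} < 1, where {x} denotes the fractional part of x. Then for every finite abelian group G that is an extension of H_1 by H_2 (i.e., G has a subgroup H isomorphic to H_2 with G/H isomorphic to H_1), one has D_±(G) = ⌊log₂ |G|⌋ + 1. In particular, if G has a subgroup H such that D_±(H) = ⌊log₂ |H|⌋ + 1 and G/H is a 2-group, then D_±(G) = ⌊log₂ |G|⌋ + 1. -/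
open Finset

/-!
The subsums of a sequence without plus-minus weighted zero-subsums are pairwise distinct, so such a
sequence in `G` has length at most `⌊log₂ |G|⌋`, and `D_±(G) = ⌊log₂ |G|⌋ + 1` says exactly that
this length is attained. If sequences over `G ⧸ H` and over `H` have no zero-subsum, then a lift of
the first to `G` followed by the second has none either: modulo `H` only the lifted terms are
visible, so none of them can occur in a zero-subsum, and the remaining terms lie in `H`. The
condition on fractional parts makes the two maximal lengths add up to `⌊log₂ |G|⌋`. In a `2`-group,
a sequence of maximal length is built from elements of order two, one term at a time, by passing to
successive quotients. The same argument works for any set of odd weights containing `1` and `-1`.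
-/

open Function

universe u v w

variable {A : Set ℤ} {G K ι κ : Type*} [AddCommGroup G] [AddCommGroup K]

/-- A family is weighted dissociated if no nonempty subfamily has a vanishing sum with weights in
`A`. This is the negation of `HasWZS`, for an arbitrary index type. For `A = {1, -1}` it is the
analogue for families of Mathlib's `AddDissociated`. -/
def WeightedDissociated (A : Set ℤ) (g : ι → G) : Prop :=
  ∀ (I : Finset ι) (a : ι → ℤ), (∀ i ∈ I, a i ∈ A) → ∑ i ∈ I, a i • g i = 0 → I = ∅

lemma not_hasWZS_iff {ℓ : ℕ} {g : Fin ℓ → G} : ¬ HasWZS A g ↔ WeightedDissociated A g := by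
  simp only [HasWZS, WeightedDissociated, not_exists, not_and, ← not_nonempty_iff_eq_empty]
  exact forall₂_congr fun I a ↦ by tauto

namespace WeightedDissociated

lemma comp {g : ι → G} (hg : WeightedDissociated A g) {f : κ → ι} (hf : Injective f) :
    WeightedDissociated A (g ∘ f) := by
  intro I a ha hsum
  have hI : I.map ⟨f, hf⟩ = ∅ := by
    apply hg _ (extend f a 0)
    · simpa [hf.extend_apply] using ha
    · simpa [hf.extend_apply] using hsum
  simpa only [map_eq_empty] using hI

lemma sumElim {q : G →+ K} {g : ι → G} {h : κ → G} (hg : WeightedDissociated A (q ∘ g))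
    (hh : WeightedDissociated A h) (hq : ∀ j, q (h j) = 0) :
    WeightedDissociated A (Sum.elim g h) := by
  intro I a ha hsum
  rw [sum_sum_eq_sum_toLeft_add_sum_toRight] at hsum
  simp only [Sum.elim_inl, Sum.elim_inr] at hsum
  have hleft : I.toLeft = ∅ := by
    refine hg _ (a ∘ Sum.inl) (fun i hi ↦ ha _ (mem_toLeft.1 hi)) ?_
    simpa [hq] using congrArg q hsum
  have hright : I.toRight = ∅ := by
    refine hh _ (a ∘ Sum.inr) (fun j hj ↦ ha _ (mem_toRight.1 hj)) ?_
    simpa [hleft] using hsum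
  rw [← toLeft_disjSum_toRight (u := I), hleft, hright, disjSum_empty, map_empty]

lemma map {g : ι → G} (hg : WeightedDissociated A g) {f : G →+ K} (hf : Injective f) :
    WeightedDissociated A (f ∘ g) := by
  intro I a ha hsum
  refine hg I a ha (hf ?_)
  simpa using hsum

lemma sum_injective {g : ι → G} (hA : {1, -1} ⊆ A) (hg : WeightedDissociated A g) :
    Injective fun I : Finset ι ↦ ∑ i ∈ I, g i := by
  classical
  intro S T hST
  have hsymm : (S \ T) ∪ (T \ S) = ∅ := by
    refine hg _ (fun i ↦ if i ∈ S then 1 else -1) (fun i _ ↦ hA ?_) ?_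
    · by_cases hi : i ∈ S <;> simp [hi]
    · have hS : ∑ i ∈ S \ T, (if i ∈ S then 1 else -1 : ℤ) • g i = ∑ i ∈ S \ T, g i :=
        sum_congr rfl fun i hi ↦ by simp [(mem_sdiff.1 hi).1]
      have hT : ∑ i ∈ T \ S, (if i ∈ S then 1 else -1 : ℤ) • g i = -∑ i ∈ T \ S, g i := by
        rw [← sum_neg_distrib]
        exact sum_congr rfl fun i hi ↦ by simp [(mem_sdiff.1 hi).2]
      rw [sum_union disjoint_sdiff_sdiff, hS, hT, ← sub_eq_add_neg, sum_sdiff_sub_sum_sdiff]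
      exact sub_eq_zero.2 hST
  simpa only [union_eq_empty, sdiff_eq_empty_iff_subset, ← subset_antisymm_iff] using hsymm

lemma two_pow_card_le [Finite G] [Fintype ι] {g : ι → G} (hA : {1, -1} ⊆ A)
    (hg : WeightedDissociated A g) : 2 ^ Fintype.card ι ≤ Nat.card G := by
  classical
  simpa only [Nat.card_eq_fintype_card, Fintype.card_finset] using
    Nat.card_le_card_of_injective _ (hg.sum_injective hA)

lemma exists_fin_add_of_quotient {m n : ℕ} {H : AddSubgroup G} {g : Fin m → G ⧸ H} {h : Fin n → H}
    (hg : WeightedDissociated A g) (hh : WeightedDissociated A h) :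
    ∃ f : Fin (m + n) → G, WeightedDissociated A f := by
  obtain ⟨s, rfl⟩ := (QuotientAddGroup.mk'_surjective H).comp_left g
  have hsum : WeightedDissociated A (Sum.elim s (H.subtype ∘ h)) :=
    hg.sumElim (hh.map H.subtype_injective) fun j ↦ by simp
  exact ⟨_, hsum.comp finSumFinEquiv.symm.injective⟩

end WeightedDissociated

lemma weightedDissociated_const [Subsingleton ι] {x : G} (hx : ∀ a ∈ A, a • x ≠ 0) :
    WeightedDissociated A fun _ : ι ↦ x := by
  intro I a ha hsum
  by_contra hI
  obtain ⟨i, hi⟩ := nonempty_iff_ne_empty.2 hI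
  have hIi : I = {i} := eq_singleton_iff_unique_mem.2 ⟨hi, fun j _ ↦ Subsingleton.elim j i⟩
  rw [hIi, sum_singleton] at hsum
  exact hx _ (ha i hi) hsum

lemma exists_weightedDissociated_of_card_eq_prime_pow {p : ℕ} [Fact p.Prime]
    (hA : ∀ a ∈ A, ¬ (p : ℤ) ∣ a) [Finite G] {k : ℕ} (hG : Nat.card G = p ^ k) :
    ∃ g : Fin k → G, WeightedDissociated A g := by
  induction k generalizing G with
  | zero => exact ⟨Fin.elim0, fun I _ _ _ ↦ I.eq_empty_of_isEmpty⟩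
  | succ k ih =>
    obtain ⟨x, hx⟩ :=
      exists_prime_addOrderOf_dvd_card' (G := G) p (hG ▸ dvd_pow_self p k.succ_ne_zero)
    let H := AddSubgroup.zmultiples x
    have hH : Nat.card H = p := by rw [Nat.card_zmultiples, hx]
    have hquot : Nat.card (G ⧸ H) = p ^ k := by
      have hcard := H.card_eq_card_quotient_mul_card_addSubgroup
      rw [hG, hH, pow_succ] at hcard
      exact (Nat.mul_right_cancel (Fact.out : p.Prime).pos hcard).symm
    obtain ⟨g, hg⟩ := ih hquot
    have hsingle : WeightedDissociated A fun _ : Fin 1 ↦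
        (⟨x, AddSubgroup.mem_zmultiples x⟩ : H) :=
      weightedDissociated_const fun a ha hax ↦ hA a ha <| by
        rw [← hx, addOrderOf_dvd_iff_zsmul_eq_zero]
        exact congrArg Subtype.val hax
    exact hg.exists_fin_add_of_quotient hsingle

lemma exists_weightedDissociated_of_lt_davW {n : ℕ} (hn : n < DavW A G) :
    ∃ g : Fin n → G, WeightedDissociated A g := by
  simpa only [Set.mem_ofPred_eq, not_forall, not_hasWZS_iff] using Nat.notMem_of_lt_sInf hn

lemma hasWZS_of_card_lt_two_pow [Finite G] (hA : {1, -1} ⊆ A) {ℓ : ℕ}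
    (hℓ : Nat.card G < 2 ^ ℓ) (g : Fin ℓ → G) : HasWZS A g := by
  by_contra hg
  have hle := (not_hasWZS_iff.1 hg).two_pow_card_le hA
  rw [Fintype.card_fin] at hle
  exact hle.not_gt hℓ

lemma davW_le_log_card_add_one [Finite G] (hA : {1, -1} ⊆ A) :
    DavW A G ≤ Nat.log 2 (Nat.card G) + 1 :=
  Nat.sInf_le <| hasWZS_of_card_lt_two_pow hA <| Nat.lt_pow_succ_log_self one_lt_two _

lemma WeightedDissociated.lt_davW [Finite G] (hA : {1, -1} ⊆ A) {n : ℕ} {g : Fin n → G}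
    (hg : WeightedDissociated A g) : n < DavW A G := by
  have hmem : DavW A G ∈ {ℓ : ℕ | ∀ g : Fin ℓ → G, HasWZS A g} :=
    Nat.sInf_mem ⟨_, hasWZS_of_card_lt_two_pow hA (Nat.lt_pow_succ_log_self one_lt_two _)⟩
  by_contra! hle
  exact not_hasWZS_iff.2 (hg.comp (Fin.castLE_injective hle)) (hmem _)

lemma davW_congr (e : G ≃+ K) : DavW A G = DavW A K := by
  have hWZS {ℓ : ℕ} (g : Fin ℓ → G) : HasWZS A g ↔ HasWZS A (e ∘ g) := by
    simp only [HasWZS, comp_apply, ← map_zsmul, ← map_sum, EmbeddingLike.map_eq_zero_iff]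
  have hforall (ℓ : ℕ) : (∀ g : Fin ℓ → G, HasWZS A g) ↔ ∀ g : Fin ℓ → K, HasWZS A g :=
    ((Equiv.refl _).arrowCongr e.toEquiv).forall_congr hWZS
  simp only [DavW, hforall]

lemma floor_logb_natCast_eq_natLog (b n : ℕ) : ⌊Real.logb b n⌋ = Nat.log b n := by
  rw [Real.floor_logb_natCast n.cast_nonneg, Int.log_natCast]

lemma floor_add_of_fract_add_fract_lt_one {R : Type*} [Ring R] [LinearOrder R]
    [IsStrictOrderedRing R] [FloorRing R] {x y : R} (h : Int.fract x + Int.fract y < 1) :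
    ⌊x + y⌋ = ⌊x⌋ + ⌊y⌋ := by
  have hfract : ⌊Int.fract x + Int.fract y⌋ = 0 :=
    Int.floor_eq_zero_iff.2 ⟨add_nonneg (Int.fract_nonneg x) (Int.fract_nonneg y), h⟩
  calc
    ⌊x + y⌋ = ⌊Int.fract x + Int.fract y + ((⌊x⌋ + ⌊y⌋ : ℤ) : R)⌋ := by
      rw [Int.cast_add, add_add_add_comm, Int.fract_add_floor, Int.fract_add_floor]
    _ = ⌊x⌋ + ⌊y⌋ := by rw [Int.floor_add_intCast, hfract, zero_add]

lemma natLog_mul_of_fract_logb_add_lt_one {b m n : ℕ} (hm : m ≠ 0) (hn : n ≠ 0)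
    (h : Int.fract (Real.logb b m) + Int.fract (Real.logb b n) < 1) :
    Nat.log b (m * n) = Nat.log b m + Nat.log b n := by
  zify
  simp only [← floor_logb_natCast_eq_natLog]
  rw [Nat.cast_mul, Real.logb_mul (mod_cast hm) (mod_cast hn),
    floor_add_of_fract_add_fract_lt_one h]

lemma davW_eq_floor_logb_add_one_iff [Finite G] (hA : {1, -1} ⊆ A) :
    (DavW A G : ℤ) = ⌊Real.logb 2 (Nat.card G)⌋ + 1 ↔
      ∃ g : Fin (Nat.log 2 (Nat.card G)) → G, WeightedDissociated A g := by
  have hfloor : ⌊Real.logb 2 (Nat.card G)⌋ = Nat.log 2 (Nat.card G) :=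
    mod_cast floor_logb_natCast_eq_natLog 2 (Nat.card G)
  rw [hfloor]
  constructor
  · intro h
    exact exists_weightedDissociated_of_lt_davW (by omega)
  · rintro ⟨g, hg⟩
    exact_mod_cast (davW_le_log_card_add_one hA).antisymm (hg.lt_davW hA)

lemma davW_eq_floor_logb_add_one_of_quotient [Finite G] (hA : {1, -1} ⊆ A) (H : AddSubgroup G)
    (hquot : (DavW A (G ⧸ H) : ℤ) = ⌊Real.logb 2 (Nat.card (G ⧸ H))⌋ + 1)
    (hsub : (DavW A H : ℤ) = ⌊Real.logb 2 (Nat.card H)⌋ + 1)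
    (hfract : Int.fract (Real.logb 2 (Nat.card (G ⧸ H))) +
      Int.fract (Real.logb 2 (Nat.card H)) < 1) :
    (DavW A G : ℤ) = ⌊Real.logb 2 (Nat.card G)⌋ + 1 := by
  have hlog : Nat.log 2 (Nat.card G) =
      Nat.log 2 (Nat.card (G ⧸ H)) + Nat.log 2 (Nat.card H) := by
    rw [H.card_eq_card_quotient_mul_card_addSubgroup]
    exact natLog_mul_of_fract_logb_add_lt_one Nat.card_pos.ne' Nat.card_pos.ne' (mod_cast hfract)
  obtain ⟨g, hg⟩ := (davW_eq_floor_logb_add_one_iff hA).1 hquot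
  obtain ⟨h, hh⟩ := (davW_eq_floor_logb_add_one_iff hA).1 hsub
  rw [davW_eq_floor_logb_add_one_iff hA, hlog]
  exact hg.exists_fin_add_of_quotient hh

lemma davW_eq_floor_logb_add_one_of_card_eq_two_pow [Finite G] (hA : {1, -1} ⊆ A)
    (hodd : ∀ a ∈ A, Odd a) {k : ℕ} (hG : Nat.card G = 2 ^ k) :
    (DavW A G : ℤ) = ⌊Real.logb 2 (Nat.card G)⌋ + 1 := by
  rw [davW_eq_floor_logb_add_one_iff hA, hG, Nat.log_pow one_lt_two]
  refine exists_weightedDissociated_of_card_eq_prime_pow (p := 2) (fun a ha ↦ ?_) hG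
  simpa only [Nat.cast_ofNat, ← even_iff_two_dvd, Int.not_even_iff_odd] using hodd a ha

theorem stmt4_general (hA : {1, -1} ⊆ A) :
    (∀ (H1 : Type u) (H2 : Type v) [AddCommGroup H1] [AddCommGroup H2],
      (DavW A H1 : ℤ) = ⌊Real.logb 2 (Nat.card H1)⌋ + 1 →
      (DavW A H2 : ℤ) = ⌊Real.logb 2 (Nat.card H2)⌋ + 1 →
      Int.fract (Real.logb 2 (Nat.card H1)) + Int.fract (Real.logb 2 (Nat.card H2)) < 1 →
      ∀ (G : Type w) [AddCommGroup G] [Finite G] (H : AddSubgroup G),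
        Nonempty (↥H ≃+ H2) → Nonempty ((G ⧸ H) ≃+ H1) →
        (DavW A G : ℤ) = ⌊Real.logb 2 (Nat.card G)⌋ + 1) ∧
    ((∀ a ∈ A, Odd a) → ∀ (G : Type w) [AddCommGroup G] [Finite G] (H : AddSubgroup G),
      (DavW A H : ℤ) = ⌊Real.logb 2 (Nat.card H)⌋ + 1 →
      (∃ k : ℕ, Nat.card (G ⧸ H) = 2 ^ k) →
      (DavW A G : ℤ) = ⌊Real.logb 2 (Nat.card G)⌋ + 1) := by
  constructor
  · rintro H1 H2 _ _ h1 h2 hfract G _ _ H ⟨e2⟩ ⟨e1⟩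
    rw [← davW_congr e1, ← Nat.card_congr e1.toEquiv] at h1
    rw [← davW_congr e2, ← Nat.card_congr e2.toEquiv] at h2
    rw [← Nat.card_congr e1.toEquiv, ← Nat.card_congr e2.toEquiv] at hfract
    exact davW_eq_floor_logb_add_one_of_quotient hA H h1 h2 hfract
  · rintro hodd G _ _ H hH ⟨k, hk⟩
    have hlogb : Real.logb 2 (Nat.card (G ⧸ H)) = k := by
      rw [hk, Nat.cast_pow, Nat.cast_ofNat, Real.logb_pow, Real.logb_self_eq_one one_lt_two,
        mul_one]
    have hquot := davW_eq_floor_logb_add_one_of_card_eq_two_pow hA hodd hk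
    refine davW_eq_floor_logb_add_one_of_quotient hA H hquot hH ?_
    rw [hlogb, Int.fract_natCast, zero_add]
    exact Int.fract_lt_one _

theorem stmt4 :
    (∀ (H1 H2 : Type) [AddCommGroup H1] [AddCommGroup H2] [Fintype H1] [Fintype H2],
      (Davpm H1 : ℤ) = ⌊Real.logb 2 (Nat.card H1)⌋ + 1 →
      (Davpm H2 : ℤ) = ⌊Real.logb 2 (Nat.card H2)⌋ + 1 →
      Int.fract (Real.logb 2 (Nat.card H1)) + Int.fract (Real.logb 2 (Nat.card H2)) < 1 →
      ∀ (G : Type) [AddCommGroup G] [Fintype G] (H : AddSubgroup G),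
        Nonempty (↥H ≃+ H2) → Nonempty ((G ⧸ H) ≃+ H1) →
        (Davpm G : ℤ) = ⌊Real.logb 2 (Nat.card G)⌋ + 1) ∧
    (∀ (G : Type) [AddCommGroup G] [Fintype G] (H : AddSubgroup G),
      (Davpm ↥H : ℤ) = ⌊Real.logb 2 (Nat.card ↥H)⌋ + 1 →
      (∃ k : ℕ, Nat.card (G ⧸ H) = 2 ^ k) →
      (Davpm G : ℤ) = ⌊Real.logb 2 (Nat.card G)⌋ + 1) := by
  obtain ⟨hext, htwo⟩ := stmt4_general (A := {1, -1}) subset_rfl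
  exact ⟨fun H1 H2 _ _ _ _ h1 h2 hf G _ _ ↦ hext H1 H2 h1 h2 hf G, fun G _ _ ↦ htwo (by simp) G⟩
end

section
/- Let G be a nontrivial finite abelian group with exponent n. Then the fully weighted Davenport constant satisfies D_{ℤ∖nℤ}(G) = rank_n(G) + 1, where the set of weights is the set of all integers not divisible by n, and rank_n(G) is the n-rank of G. -/
open Finset

/-- A family of nonzero elements is independent if `∑ i, a i • f i = 0` with integer
coefficients forces `a i • f i = 0` for every `i`. -/
def IsIndepFam {G : Type*} [AddCommGroup G] {k : ℕ} (f : Fin k → G) : Prop :=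
  (∀ i, f i ≠ 0) ∧ ∀ a : Fin k → ℤ, ∑ i, a i • f i = 0 → ∀ i, a i • f i = 0

/-- The `n`-rank of `G`: the maximal cardinality of an independent family of elements
of order `n` in `G`. -/
noncomputable def nRank (G : Type*) [AddCommGroup G] (n : ℕ) : ℕ :=
  sSup {k : ℕ | ∃ f : Fin k → G, (∀ i, addOrderOf (f i) = n) ∧ IsIndepFam f}

/-! With `n` the exponent, `G` is a module over `ZMod n`. For a sequence in `G`, having no
zero-subsum with weights in `ℤ ∖ nℤ`, being an independent family of elements of order `n`, and
being linearly independent over `ZMod n` are the same. Linearly independent sequences of length `k`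
exist exactly for `k` up to the rank of the module, so the Davenport constant is the first length
beyond that rank. -/

section

open Module Cardinal

theorem exists_linearIndependent_fin_iff_le_finrank {R M : Type*} [Semiring R] [Nontrivial R]
    [AddCommMonoid M] [Module R M] (hM : Module.rank R M < ℵ₀) {k : ℕ} :
    (∃ f : Fin k → M, LinearIndependent R f) ↔ k ≤ finrank R M := by
  rw [← le_rank_iff, ← cast_toNat_of_lt_aleph0 hM, Nat.cast_le, finrank]

variable {n : ℕ} {G : Type*} [AddCommGroup G] [Module (ZMod n) G]

theorem zsmul_eq_zero_of_natCast_dvd {a : ℤ} (ha : (n : ℤ) ∣ a) (g : G) : a • g = 0 := by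
  rw [← Int.cast_smul_eq_zsmul (ZMod n), (ZMod.intCast_zmod_eq_zero_iff_dvd a n).2 ha, zero_smul]

theorem linearIndependent_zmod_iff {ι : Type*} [Fintype ι] {f : ι → G} :
    LinearIndependent (ZMod n) f ↔
      ∀ a : ι → ℤ, ∑ i, a i • f i = 0 → ∀ i, (n : ℤ) ∣ a i := by
  simp only [Fintype.linearIndependent_iff, ZMod.intCast_surjective.comp_left.forall,
    Function.comp_apply, Int.cast_smul_eq_zsmul, ZMod.intCast_zmod_eq_zero_iff_dvd]

theorem addOrderOf_eq_of_linearIndependent_zmod {ι : Type*} {f : ι → G}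
    (hf : LinearIndependent (ZMod n) f) (i : ι) : addOrderOf (f i) = n := by
  refine Nat.dvd_antisymm (addOrderOf_dvd_of_nsmul_eq_zero ?_) ?_
  · exact_mod_cast zsmul_eq_zero_of_natCast_dvd (dvd_refl (n : ℤ)) (f i)
  · rw [← ZMod.natCast_eq_zero_iff]
    refine hf.smul_left_injective i ?_
    simp only [Nat.cast_smul_eq_nsmul, addOrderOf_nsmul_eq_zero, zero_smul]

theorem linearIndependent_zmod_iff_not_hasWZS {k : ℕ} {f : Fin k → G} :
    LinearIndependent (ZMod n) f ↔ ¬ HasWZS {a : ℤ | ¬ (n : ℤ) ∣ a} f := by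
  classical
  rw [linearIndependent_zmod_iff]
  constructor
  · rintro hf ⟨I, a, ⟨i, hi⟩, ha, hsum⟩
    have hdvd := hf (fun j ↦ if j ∈ I then a j else 0) (by simpa [ite_smul] using hsum) i
    exact ha i hi (by simpa only [if_pos hi] using hdvd)
  · intro hf a hsum i
    by_contra hi
    refine hf ⟨univ.filter fun j ↦ ¬ (n : ℤ) ∣ a j, a, ⟨i, by simpa using hi⟩, by simp, ?_⟩
    rw [← hsum]
    refine sum_subset (subset_univ _) fun j _ hj ↦ ?_
    exact zsmul_eq_zero_of_natCast_dvd (by simpa using hj) (f j)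

theorem linearIndependent_zmod_iff_isIndepFam [Nontrivial (ZMod n)] {k : ℕ} {f : Fin k → G} :
    LinearIndependent (ZMod n) f ↔ (∀ i, addOrderOf (f i) = n) ∧ IsIndepFam f := by
  constructor
  · intro hf
    refine ⟨addOrderOf_eq_of_linearIndependent_zmod hf, hf.ne_zero, fun a hsum i ↦ ?_⟩
    exact zsmul_eq_zero_of_natCast_dvd (linearIndependent_zmod_iff.1 hf a hsum i) (f i)
  · rintro ⟨horder, -, hindep⟩
    refine linearIndependent_zmod_iff.2 fun a hsum i ↦ ?_
    rw [← horder i]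
    exact addOrderOf_dvd_iff_zsmul_eq_zero.2 (hindep a hsum i)

variable [Nontrivial (ZMod n)]

theorem nRank_eq_finrank (hG : Module.rank (ZMod n) G < ℵ₀) :
    nRank G n = finrank (ZMod n) G := by
  simp only [nRank, ← linearIndependent_zmod_iff_isIndepFam,
    exists_linearIndependent_fin_iff_le_finrank hG]
  exact csSup_Iic

theorem davW_eq_finrank_add_one (hG : Module.rank (ZMod n) G < ℵ₀) :
    DavW {a : ℤ | ¬ (n : ℤ) ∣ a} G = finrank (ZMod n) G + 1 := by
  have hset : {ℓ : ℕ | ∀ g : Fin ℓ → G, HasWZS {a : ℤ | ¬ (n : ℤ) ∣ a} g} =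
      Set.Ici (finrank (ZMod n) G + 1) := by
    ext ℓ
    rw [Set.mem_ofPred_eq, Set.mem_Ici, Nat.add_one_le_iff, ← not_le,
      ← exists_linearIndependent_fin_iff_le_finrank hG]
    simp only [linearIndependent_zmod_iff_not_hasWZS, not_exists, not_not]
  rw [DavW, hset, csInf_Ici]

theorem stmt13_general (hG : Module.rank (ZMod n) G < ℵ₀) :
    DavW {a : ℤ | ¬ (n : ℤ) ∣ a} G = nRank G n + 1 := by
  rw [davW_eq_finrank_add_one hG, nRank_eq_finrank hG]

end

instance nontrivial_zmod_exponent (G : Type*) [AddCommGroup G] [Nontrivial G] :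
    Nontrivial (ZMod (AddMonoid.exponent G)) :=
  ZMod.nontrivial_iff.2 fun h ↦ not_subsingleton G (AddMonoid.exp_eq_one_iff.1 h)

theorem stmt13 (G : Type) [AddCommGroup G] [Fintype G] [Nontrivial G] :
    DavW {a : ℤ | ¬ ((AddMonoid.exponent G : ℤ) ∣ a)} G
      = nRank G (AddMonoid.exponent G) + 1 := by
  have : Module (ZMod (AddMonoid.exponent G)) G :=
    AddCommGroup.zmodModule AddMonoid.exponent_nsmul_eq_zero
  exact stmt13_general (Module.rank_lt_aleph0 _ G)
end

section
/- D_±(C_3 ⊕ C_3 ⊕ C_9) = 6. -/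
open Finset

/-!
A zero-subsum-free sequence is one whose only vanishing sum `∑ e i • g i` with `e i ∈ {0, 1, -1}`
is trivial. Suppose `g 0, …, g 5` in `G = C₃ ⊕ C₃ ⊕ C₉` has this property. If some `3 • g i`
vanished, the `3 * 2 ^ 5 = 96` sums with `e i` arbitrary and all other coefficients in `{0, 1}`
would be distinct, whereas `G` has 81 elements; so after sign changes every `3 • g i` is the same
generator of `3G ≅ C₃`. Read modulo `3`, the vectors `e` whose sum lies in `3G` form a ternary code
of length `6` with at least `27` words, and each nonzero word has a nonzero sum in `3G`. This makes
the coordinates of every word add up to `0`, forbids disjoint supports, so that every nonzero word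
has weight at least `3`, and forbids words of weight `6`. No ternary code has all these properties:
to a word of weight `3` one can add two others, each meeting its support in one coordinate, to reach
weight `6`; and if there is none, the words vanishing on `{0, 1}`, on `{2, 3}` and on `{4, 5}` show
that `-1` would be a square modulo `3`.
-/

section SignedSum

variable {ι κ G : Type*} [Fintype ι] [Fintype κ] [AddCommGroup G]

/-- The sum `∑ i, e i • g i` with coefficients `0, 1, -1`, indexed by vectors `e` over `ZMod 3` so
that coefficient vectors can be added; the residues are lifted by `ZMod.valMinAbs`. -/
def signedSum (g : ι → G) (e : ι → ZMod 3) : G :=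
  ∑ i, (e i).valMinAbs • g i

/-- A family is dissociated if its only vanishing sum with coefficients in `{0, 1, -1}` is the
trivial one, that is, if it has no plus-minus weighted zero-subsum. -/
def Dissociated (g : ι → G) : Prop :=
  ∀ e, signedSum g e = 0 → e = 0

lemma valMinAbs_eq_one_or_neg_one {t : ZMod 3} (ht : t ≠ 0) :
    t.valMinAbs = 1 ∨ t.valMinAbs = -1 := by
  decide +revert

lemma signedSum_neg (g : ι → G) (e : ι → ZMod 3) : signedSum g (-e) = -signedSum g e := by
  have valMinAbs_neg : ∀ t : ZMod 3, (-t).valMinAbs = -t.valMinAbs := by decide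
  simp [signedSum, valMinAbs_neg]

lemma signedSum_mul (g : ι → G) (ε e : ι → ZMod 3) :
    signedSum g (ε * e) = signedSum (fun i => (ε i).valMinAbs • g i) e := by
  have valMinAbs_mul : ∀ s t : ZMod 3, (s * t).valMinAbs = t.valMinAbs * s.valMinAbs := by decide
  simp [signedSum, valMinAbs_mul, mul_smul]

lemma signedSum_extend {f : κ → ι} (hf : Function.Injective f) (g : ι → G) (e : κ → ZMod 3) :
    signedSum g (Function.extend f e (0 : ι → ZMod 3)) = signedSum (g ∘ f) e := by
  symm
  refine Fintype.sum_of_injective f hf _ _ (fun i hi => ?_) (fun k => ?_)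
  · rw [Function.extend_apply' _ _ _ hi, Pi.zero_apply, ZMod.valMinAbs_zero, zero_smul]
  · simp [hf.extend_apply]

lemma signedSum_sub {g : ι → G} {u v : ι → ZMod 3}
    (h : ∀ i, 3 • g i = 0 ∨
      u i ∈ ({0, 1} : Finset (ZMod 3)) ∧ v i ∈ ({0, 1} : Finset (ZMod 3))) :
    signedSum g (u - v) = signedSum g u - signedSum g v := by
  have carry : ∀ a b : ZMod 3, (a - b).valMinAbs =
      a.valMinAbs - b.valMinAbs + (a * b * (b - a)).valMinAbs * (3 : ℕ) := by decide
  have no_carry : ∀ a ∈ ({0, 1} : Finset (ZMod 3)), ∀ b ∈ ({0, 1} : Finset (ZMod 3)),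
      (a - b).valMinAbs = a.valMinAbs - b.valMinAbs := by decide
  simp only [signedSum, Pi.sub_apply, ← Finset.sum_sub_distrib, ← sub_smul]
  refine Finset.sum_congr rfl fun i _ => ?_
  rcases h i with hi | ⟨hu, hv⟩
  · rw [carry, add_smul, mul_smul, natCast_zsmul, hi, smul_zero, add_zero]
  · rw [no_carry _ hu _ hv]

theorem hasWZS_iff_not_dissociated {ℓ : ℕ} (g : Fin ℓ → G) :
    HasWZS {1, -1} g ↔ ¬ Dissociated g := by
  simp only [Dissociated, not_forall, exists_prop]
  constructor
  · rintro ⟨I, a, ⟨i, hi⟩, ha, hsum⟩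
    have lift_cast : ∀ j ∈ I, ((a j : ℤ) : ZMod 3).valMinAbs = a j := by
      intro j hj
      rcases ha j hj with h | h <;> rw [h] <;> decide
    refine ⟨fun j => if j ∈ I then (a j : ZMod 3) else 0, ?_, fun h => ?_⟩
    · rw [signedSum, ← hsum, ← Finset.sum_subset (Finset.subset_univ I)]
      · exact Finset.sum_congr rfl fun j hj => by rw [if_pos hj, lift_cast j hj]
      · intro j _ hj
        simp [hj]
    · have hai : (a i : ZMod 3) = 0 := by simpa [hi] using congrFun h i
      rcases ha i hi with h | h <;> rw [h] at hai <;> revert hai <;> decide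
  · rintro ⟨e, hsum, he⟩
    obtain ⟨i, hi⟩ := Function.ne_iff.mp he
    refine ⟨univ.filter (e · ≠ 0), fun j => (e j).valMinAbs, ⟨i, by simpa using hi⟩,
      fun j hj => ?_, ?_⟩
    · exact valMinAbs_eq_one_or_neg_one (Finset.mem_filter.mp hj).2
    · rw [← hsum]
      refine Finset.sum_subset (Finset.subset_univ _) fun j _ hj => ?_
      have hj0 : e j = 0 := by simpa using hj
      simp only [hj0, ZMod.valMinAbs_zero, zero_smul]

namespace Dissociated

variable {g : ι → G}

lemma comp {f : κ → ι} (hg : Dissociated g) (hf : Function.Injective f) :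
    Dissociated (g ∘ f) := by
  intro e he
  have hzero := hg _ ((signedSum_extend hf g e).trans he)
  funext k
  simpa [hf.extend_apply] using congrFun hzero (f k)

lemma valMinAbs_smul (hg : Dissociated g) {ε : ι → ZMod 3} (hε : ∀ i, ε i ≠ 0) :
    Dissociated fun i => (ε i).valMinAbs • g i := by
  intro e he
  have hzero := hg _ ((signedSum_mul g ε e).trans he)
  funext i
  exact (mul_eq_zero.mp (congrFun hzero i)).resolve_left (hε i)

/-- Pigeonhole for the sums with coefficients in `{0, 1}`, except that at an element of order
dividing `3` all three coefficients are allowed. -/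
lemma three_mul_two_pow_le_card [Finite G] (hg : Dissociated g) {i : ι} (hi : 3 • g i = 0) :
    3 * 2 ^ (Fintype.card ι - 1) ≤ Nat.card G := by
  classical
  let digits : ι → Finset (ZMod 3) := Function.update (fun _ => {0, 1}) i univ
  have digits_of_ne : ∀ j ≠ i, digits j = {0, 1} := fun j hj => Function.update_of_ne hj _ _
  have hinj : Set.InjOn (signedSum g) (Fintype.piFinset digits : Set (ι → ZMod 3)) := by
    intro u hu v hv huv
    refine sub_eq_zero.mp (hg _ ?_)
    rw [signedSum_sub, huv, sub_self]
    intro j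
    rcases eq_or_ne j i with rfl | hj
    · exact .inl hi
    · rw [← digits_of_ne j hj]
      exact .inr ⟨Fintype.mem_piFinset.mp hu j, Fintype.mem_piFinset.mp hv j⟩
  have hcard : #(Fintype.piFinset digits) = 3 * 2 ^ (Fintype.card ι - 1) := by
    have card_digits : ∀ j ∈ univ.erase i, #(digits j) = 2 := by
      intro j hj
      rw [digits_of_ne j (Finset.ne_of_mem_erase hj)]
      rfl
    have card_digits_self : #(digits i) = 3 := by simp [digits]
    rw [Fintype.card_piFinset, ← Finset.mul_prod_erase univ _ (mem_univ i),
      Finset.prod_congr rfl card_digits, Finset.prod_const,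
      Finset.card_erase_of_mem (mem_univ i), Finset.card_univ, card_digits_self]
  calc 3 * 2 ^ (Fintype.card ι - 1) = Set.ncard (Fintype.piFinset digits : Set (ι → ZMod 3)) := by
        rw [Set.ncard_coe_finset, hcard]
    _ ≤ Nat.card G := by
      rw [← hinj.ncard_image, ← Set.ncard_univ]
      exact Set.ncard_le_ncard (Set.subset_univ _)

end Dissociated

theorem davpm_eq_of_dissociated {n : ℕ} {g : Fin n → G} (hg : Dissociated g)
    (hn : ∀ g : Fin (n + 1) → G, ¬ Dissociated g) : Davpm G = n + 1 := by
  have hmem : n + 1 ∈ {ℓ : ℕ | ∀ g : Fin ℓ → G, HasWZS {1, -1} g} :=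
    fun g => (hasWZS_iff_not_dissociated g).mpr (hn g)
  refine le_antisymm (Nat.sInf_le hmem) (le_csInf ⟨_, hmem⟩ fun ℓ hℓ => ?_)
  by_contra! hlt
  have hle : ℓ ≤ n := Nat.lt_succ_iff.mp hlt
  exact (hasWZS_iff_not_dissociated _).mp (hℓ _) (hg.comp (Fin.castLE_injective hle))

end SignedSum

lemma exists_ne_zero_of_card_pow_lt_card {ι A : Type*} [AddGroup A] [Finite A]
    (K : AddSubgroup (ι → A)) (s : Finset ι) (hs : Nat.card A ^ #s < Nat.card K) :
    ∃ u ∈ K, u ≠ 0 ∧ ∀ i ∈ s, u i = 0 := by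
  by_contra! h
  have hinj : Function.Injective fun (u : K) (i : s) => u.1 i := by
    intro u v huv
    by_contra hne
    obtain ⟨i, hi, hne⟩ := h (u - v) (K.sub_mem u.2 v.2)
      (by simpa [sub_eq_zero] using fun h => hne (Subtype.ext h))
    exact hne (sub_eq_zero.mpr (congrFun huv ⟨i, hi⟩))
  have hle := Nat.card_le_card_of_injective _ hinj
  rw [Nat.card_fun, Nat.card_eq_finsetCard] at hle
  exact hs.not_ge hle

section Relations

variable {ι G : Type*} [Fintype ι] [AddCommGroup G] {g : ι → G} {φ : ZMod 3 →+ G}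

lemma map_eq_valMinAbs_smul {n : ℕ} (φ : ZMod n →+ G) (t : ZMod n) : φ t = t.valMinAbs • φ 1 := by
  rw [← map_zsmul, zsmul_one, ZMod.coe_valMinAbs]

/-- The lift `ZMod.valMinAbs` is not additive; its carry at `a, b` is the cubic form
`a * b * (a + b)`. -/
lemma signedSum_add (hg : ∀ i, 3 • g i = φ 1) (u v : ι → ZMod 3) :
    signedSum g (u + v) =
      signedSum g u + signedSum g v + φ (∑ i, u i * v i * (u i + v i)) := by
  have carry : ∀ a b : ZMod 3, (a + b).valMinAbs =
      a.valMinAbs + b.valMinAbs + (a * b * (a + b)).valMinAbs * (3 : ℕ) := by decide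
  simp only [signedSum, map_sum, ← Finset.sum_add_distrib, Pi.add_apply]
  refine Finset.sum_congr rfl fun i _ => ?_
  rw [carry, add_smul, add_smul, mul_smul, natCast_zsmul, hg, ← map_eq_valMinAbs_smul]

/-- The coefficient vectors whose signed sum vanishes modulo the range of `φ`. For
`G = C₃ ⊕ C₃ ⊕ C₉` and `φ` the embedding of `C₃` as `3G`, these are the linear relations over
`ZMod 3` between the images of the `g i` in `G / 3G`. -/
def relations (hg : ∀ i, 3 • g i = φ 1) : AddSubgroup (ι → ZMod 3) :=
  (AddMonoidHom.mk' (fun u => QuotientAddGroup.mk' φ.range (signedSum g u)) fun u v => by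
    rw [signedSum_add hg, map_add, map_add, add_eq_left]
    exact (QuotientAddGroup.eq_zero_iff _).mpr ⟨_, rfl⟩).ker

lemma mem_relations (hg : ∀ i, 3 • g i = φ 1) {u : ι → ZMod 3} :
    u ∈ relations hg ↔ ∃ t, φ t = signedSum g u := by
  simp [relations]

lemma three_pow_le_card_relations [Finite G] (hg : ∀ i, 3 • g i = φ 1)
    (hφ : Function.Injective φ) :
    3 * 3 ^ Fintype.card ι ≤ Nat.card G * Nat.card (relations hg) := by
  have hrange : Nat.card φ.range = 3 := by
    rw [← Nat.card_congr (φ.ofInjective hφ).toEquiv, Nat.card_zmod]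
  have hindex : (relations hg).index ≤ φ.range.index := by
    rw [relations, AddSubgroup.index_ker, AddSubgroup.index]
    exact Finite.card_subtype_le _
  have hvec : Nat.card (relations hg) * (relations hg).index = 3 ^ Fintype.card ι := by
    rw [AddSubgroup.card_mul_index, Nat.card_fun, Nat.card_zmod, Nat.card_eq_fintype_card]
  calc 3 * 3 ^ Fintype.card ι
      = Nat.card φ.range * (Nat.card (relations hg) * (relations hg).index) := by
        rw [hrange, hvec]
    _ ≤ Nat.card φ.range * (Nat.card (relations hg) * φ.range.index) := by gcongr
    _ = Nat.card G * Nat.card (relations hg) := by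
        rw [← AddSubgroup.card_mul_index φ.range]
        ring

lemma sum_eq_zero_of_mem_relations (hg : ∀ i, 3 • g i = φ 1) (hφ : Function.Injective φ)
    {u : ι → ZMod 3} (hu : u ∈ relations hg) : ∑ i, u i = 0 := by
  obtain ⟨t, ht⟩ := (mem_relations hg).mp hu
  have three_smul_eq_zero : ∀ t : ZMod 3, 3 • t = 0 := by decide
  apply hφ
  calc φ (∑ i, u i) = ∑ i, (u i).valMinAbs • φ 1 := by
        simp only [map_sum, ← map_eq_valMinAbs_smul]
    _ = 3 • signedSum g u := by
        simp only [signedSum, Finset.smul_sum, smul_comm 3, hg]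
    _ = φ (3 • t) := by rw [← ht, map_nsmul]
    _ = φ 0 := by rw [three_smul_eq_zero]

namespace Dissociated

lemma exists_ne_zero_of_mem_relations (hd : Dissociated g) (hg : ∀ i, 3 • g i = φ 1)
    {u : ι → ZMod 3} (hu : u ∈ relations hg) (hu0 : u ≠ 0) :
    ∃ t, t ≠ 0 ∧ signedSum g u = φ t := by
  obtain ⟨t, ht⟩ := (mem_relations hg).mp hu
  refine ⟨t, ?_, ht.symm⟩
  rintro rfl
  exact hu0 (hd u (by rw [← ht, map_zero]))

/-- For `u, v` with disjoint supports there is no carry, so one of `u + v`, `u - v` would be a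
vanishing signed sum. -/
lemma exists_mul_ne_zero (hd : Dissociated g) (hg : ∀ i, 3 • g i = φ 1) {u v : ι → ZMod 3}
    (hu : u ∈ relations hg) (hv : v ∈ relations hg) (hu0 : u ≠ 0) (hv0 : v ≠ 0) :
    ∃ i, u i * v i ≠ 0 := by
  by_contra! hdisj
  obtain ⟨a, ha, hua⟩ := hd.exists_ne_zero_of_mem_relations hg hu hu0
  obtain ⟨b, hb, hvb⟩ := hd.exists_ne_zero_of_mem_relations hg hv hv0
  obtain ⟨i, hi⟩ := Function.ne_iff.mp hu0
  have hvi : v i = 0 := (mul_eq_zero.mp (hdisj i)).resolve_left hi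
  have hadd : a + b ≠ 0 := by
    intro hab
    have hzero : u + v = 0 := hd _ (by
      simp only [signedSum_add hg, hdisj, zero_mul, Finset.sum_const_zero, hua, hvb,
        ← map_add, add_zero, hab, map_zero])
    exact hi (by simpa [hvi] using congrFun hzero i)
  have hsub : a + -b ≠ 0 := by
    intro hab
    have hzero : u + -v = 0 := hd _ (by
      simp only [signedSum_add hg, Pi.neg_apply, mul_neg, hdisj, neg_zero, zero_mul,
        Finset.sum_const_zero, signedSum_neg, hua, hvb, ← map_neg, ← map_add, add_zero, hab,
        map_zero])
    exact hi (by simpa [hvi] using congrFun hzero i)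
  have eq_or_eq_neg : ∀ a b : ZMod 3, a ≠ 0 → b ≠ 0 → a + b = 0 ∨ a + -b = 0 := by decide
  exact (eq_or_eq_neg a b ha hb).elim hadd hsub

lemma card_relations_le_three_pow (hd : Dissociated g) (hg : ∀ i, 3 • g i = φ 1)
    {u : ι → ZMod 3} (hu : u ∈ relations hg) (hu0 : u ≠ 0) :
    Nat.card (relations hg) ≤ 3 ^ hammingNorm u := by
  by_contra! hlt
  obtain ⟨v, hv, hv0, hvu⟩ := exists_ne_zero_of_card_pow_lt_card (relations hg) {i | u i ≠ 0}
    (by rwa [Nat.card_zmod])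
  obtain ⟨i, hi⟩ := hd.exists_mul_ne_zero hg hu hv hu0 hv0
  exact right_ne_zero_of_mul hi (hvu i (by simpa using left_ne_zero_of_mul hi))

/-- If `u` has no zero coordinate then `u i ^ 2 = 1`, and along the line `v + t • u` the signed sum
is an affine function of `t`; it has no zero, so its slope `b + ∑ i, u i * v i ^ 2` vanishes. -/
lemma sum_mul_sq_eq_neg (hd : Dissociated g) (hg : ∀ i, 3 • g i = φ 1)
    (hφ : Function.Injective φ) {u v : ι → ZMod 3} (hu : ∀ i, u i ≠ 0) {b : ZMod 3}
    (hub : signedSum g u = φ b) (hv : v ∈ relations hg) (hv0 : v ≠ 0) (hvi : ∃ i, v i = 0) :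
    ∑ i, u i * v i ^ 2 = -b := by
  obtain ⟨i, hi⟩ := hvi
  obtain ⟨a, ha, hva⟩ := hd.exists_ne_zero_of_mem_relations hg hv hv0
  have hsum : ∑ i, v i = 0 := sum_eq_zero_of_mem_relations hg hφ hv
  have sq_eq_one : ∀ t : ZMod 3, t ≠ 0 → t ^ 2 = 1 := by decide
  set q := ∑ i, u i * v i ^ 2 with hq
  have carry_add : ∑ i, v i * u i * (v i + u i) = q := by
    rw [← add_zero q, ← hsum, hq, ← Finset.sum_add_distrib]
    exact Finset.sum_congr rfl fun j _ => by linear_combination v j * sq_eq_one _ (hu j)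
  have carry_sub : ∑ i, v i * (-u) i * (v i + (-u) i) = -q := by
    rw [← add_zero (-q), ← hsum, hq, ← Finset.sum_neg_distrib, ← Finset.sum_add_distrib]
    exact Finset.sum_congr rfl fun j _ => by
      simp only [Pi.neg_apply]
      linear_combination v j * sq_eq_one _ (hu j)
  have hadd : a + b + q ≠ 0 := by
    intro h
    have hzero : v + u = 0 := hd _ (by
      rw [signedSum_add hg, carry_add, hva, hub, ← map_add, ← map_add, h, map_zero])
    exact hu i (by simpa [hi] using congrFun hzero i)
  have hsub : a + -b + -q ≠ 0 := by
    intro h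
    have hzero : v + -u = 0 := hd _ (by
      rw [signedSum_add hg, carry_sub, signedSum_neg, hva, hub, ← map_neg, ← map_add, ← map_add,
        h, map_zero])
    exact hu i (by simpa [hi] using congrFun hzero i)
  have slope_eq_zero : ∀ a b q : ZMod 3, a ≠ 0 → a + b + q ≠ 0 → a + -b + -q ≠ 0 → q = -b := by
    decide
  exact slope_eq_zero a b q ha hadd hsub

/-- For `u` without zero coordinates, `sum_mul_sq_eq_neg` would make `q v = ∑ i, u i * v i ^ 2` a
quadratic form that is a nonzero constant on the nonzero vectors of a plane, against the
parallelogram law. -/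
lemma exists_apply_eq_zero (hd : Dissociated g) (hg : ∀ i, 3 • g i = φ 1)
    (hφ : Function.Injective φ) (hcard : 9 < Nat.card (relations hg)) {u : ι → ZMod 3}
    (hu : u ∈ relations hg) : ∃ i, u i = 0 := by
  classical
  by_contra! hfull
  have exists_vanishing : ∀ i j, ∃ v ∈ relations hg, v ≠ 0 ∧ v i = 0 ∧ v j = 0 := by
    intro i j
    obtain ⟨v, hv, hv0, hvij⟩ := exists_ne_zero_of_card_pow_lt_card (relations hg) {i, j} <| by
      rw [Nat.card_zmod]
      exact (Nat.pow_le_pow_right (by norm_num) Finset.card_le_two).trans_lt hcard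
    exact ⟨v, hv, hv0, hvij i (by simp), hvij j (by simp)⟩
  obtain ⟨i⟩ : Nonempty ι := by
    by_contra! hempty
    exact hcard.not_ge (Finite.card_le_one_iff_subsingleton.mpr inferInstance |>.trans (by decide))
  obtain ⟨b, hb, hub⟩ := hd.exists_ne_zero_of_mem_relations hg hu
    fun h => hfull i (congrFun h i)
  obtain ⟨v, hv, hv0, hvi, -⟩ := exists_vanishing i i
  obtain ⟨k, hvk⟩ := Function.ne_iff.mp hv0
  obtain ⟨w, hw, hw0, hwi, hwk⟩ := exists_vanishing i k
  have value : ∀ x ∈ relations hg, x ≠ 0 → x i = 0 → ∑ j, u j * x j ^ 2 = -b :=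
    fun x hx hx0 hxi => hd.sum_mul_sq_eq_neg hg hφ hfull hub hx hx0 ⟨i, hxi⟩
  have hadd := value (v + w) ((relations hg).add_mem hv hw)
    (fun h => hvk (by simpa [hwk] using congrFun h k)) (by simp [hvi, hwi])
  have hsub := value (v - w) ((relations hg).sub_mem hv hw)
    (fun h => hvk (by simpa [hwk] using congrFun h k)) (by simp [hvi, hwi])
  have parallelogram : ∑ j, u j * (v + w) j ^ 2 + ∑ j, u j * (v - w) j ^ 2
      = 2 * ∑ j, u j * v j ^ 2 + 2 * ∑ j, u j * w j ^ 2 := by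
    simp only [Finset.mul_sum, ← Finset.sum_add_distrib, Pi.add_apply, Pi.sub_apply]
    exact Finset.sum_congr rfl fun j _ => by ring
  rw [hadd, hsub, value v hv hv0 hvi, value w hw hw0 hwi] at parallelogram
  have eq_zero_of_two_mul : ∀ b : ZMod 3, -b + -b = 2 * -b + 2 * -b → b = 0 := by decide
  exact hb (eq_zero_of_two_mul b parallelogram)

end Dissociated

end Relations

lemma apply_eq_apply_of_hammingNorm_eq_three {ι : Type*} [Fintype ι] {u : ι → ZMod 3}
    (hsum : ∑ i, u i = 0) (hu : hammingNorm u = 3) {i j : ι} (hi : u i ≠ 0) (hj : u j ≠ 0) :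
    u i = u j := by
  classical
  obtain ⟨a, b, c, hab, hac, hbc, hsupp⟩ := Finset.card_eq_three.mp hu
  have hmem : ∀ k, u k ≠ 0 ↔ k = a ∨ k = b ∨ k = c := by
    intro k
    simpa using Finset.ext_iff.mp hsupp k
  have habc : u a + u b + u c = 0 := by
    rw [← hsum, ← Finset.sum_filter_ne_zero, hsupp, Finset.sum_insert (by simp [hab, hac]),
      Finset.sum_pair hbc, add_assoc]
  have eq_of_add_eq_zero : ∀ x y z : ZMod 3, x ≠ 0 → y ≠ 0 → z ≠ 0 → x + y + z = 0 →
      x = y ∧ y = z := by decide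
  obtain ⟨hab', hbc'⟩ := eq_of_add_eq_zero _ _ _ ((hmem a).mpr (by simp))
    ((hmem b).mpr (by simp)) ((hmem c).mpr (by simp)) habc
  rcases (hmem i).mp hi with rfl | rfl | rfl <;> rcases (hmem j).mp hj with rfl | rfl | rfl <;>
    simp [hab', hbc']

section NoFullWord

variable {ι : Type*} {K : AddSubgroup (ι → ZMod 3)}

lemma exists_apply_eq_zero_and_apply_eq_zero (hzero : ∀ u ∈ K, ∃ i, u i = 0)
    {u v : ι → ZMod 3} (hu : u ∈ K) (hv : v ∈ K) {a : ι} (h : ∀ i ≠ a, u i = 0 ∨ v i = 0) :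
    ∃ i, u i = 0 ∧ v i = 0 := by
  by_contra! hne
  have eq_a : ∀ i, (u i = 0 ↔ v i = 0) → i = a := by
    intro i hi
    by_contra hia
    rcases h i hia with hui | hvi
    · exact hne i hui (hi.mp hui)
    · exact hne i (hi.mpr hvi) hvi
  have hadd : u a + v a = 0 := by
    obtain ⟨i, hi⟩ := hzero _ (K.add_mem hu hv)
    rw [Pi.add_apply] at hi
    rwa [eq_a i (by grind)] at hi
  have hsub : u a - v a = 0 := by
    obtain ⟨i, hi⟩ := hzero _ (K.sub_mem hu hv)
    rw [Pi.sub_apply] at hi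
    rwa [eq_a i (by grind)] at hi
  have eq_zero : ∀ s t : ZMod 3, s + t = 0 → s - t = 0 → s = 0 ∧ t = 0 := by decide
  obtain ⟨hua, hva⟩ := eq_zero _ _ hadd hsub
  exact hne a hua hva

lemma mul_mul_mul_eq_neg_one_of_exists_apply_eq_zero (hzero : ∀ u ∈ K, ∃ i, u i = 0)
    {u v : ι → ZMod 3} (hu : u ∈ K) (hv : v ∈ K) {i j : ι} (hor : ∀ k, u k ≠ 0 ∨ v k ≠ 0)
    (hand : ∀ k, u k ≠ 0 ∧ v k ≠ 0 ↔ k = i ∨ k = j) :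
    u i * u j * (v i * v j) = -1 := by
  have hadd : u i + v i = 0 ∨ u j + v j = 0 := by
    obtain ⟨k, hk⟩ := hzero _ (K.add_mem hu hv)
    rw [Pi.add_apply] at hk
    grind
  have hsub : u i - v i = 0 ∨ u j - v j = 0 := by
    obtain ⟨k, hk⟩ := hzero _ (K.sub_mem hu hv)
    rw [Pi.sub_apply] at hk
    grind
  have mul_eq_neg_one : ∀ a b c d : ZMod 3, a ≠ 0 → b ≠ 0 → c ≠ 0 → d ≠ 0 →
      (a + c = 0 ∨ b + d = 0) → (a - c = 0 ∨ b - d = 0) → a * b * (c * d) = -1 := by decide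
  obtain ⟨hui, hvi⟩ := (hand i).mpr (.inl rfl)
  obtain ⟨huj, hvj⟩ := (hand j).mpr (.inr rfl)
  exact mul_eq_neg_one _ _ _ _ hui huj hvi hvj hadd hsub

end NoFullWord

section TernaryCode

variable {K : AddSubgroup (Fin 6 → ZMod 3)}

lemma exists_mem_apply_ne_zero_iff_of_hammingNorm_eq_three (hcard : 27 ≤ Nat.card K)
    (hwt : ∀ u ∈ K, u ≠ 0 → 3 ≤ hammingNorm u) (hzero : ∀ u ∈ K, ∃ i, u i = 0)
    {u : Fin 6 → ZMod 3} (hu : u ∈ K) (hu3 : hammingNorm u = 3) {a : Fin 6} (ha : u a ≠ 0) :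
    ∃ w ∈ K, hammingNorm w = 3 ∧
      ∃ d, u d = 0 ∧ ∀ i, w i ≠ 0 ↔ i = a ∨ u i = 0 ∧ i ≠ d := by
  let s : Finset (Fin 6) := ({i | u i ≠ 0} : Finset (Fin 6)).erase a
  have mem_s : ∀ i, i ∈ s ↔ i ≠ a ∧ u i ≠ 0 := by simp [s]
  have hs : #s = 2 := by
    rw [Finset.card_erase_of_mem (by simpa using ha)]
    exact congrArg (· - 1) hu3
  obtain ⟨w, hw, hw0, hws⟩ := exists_ne_zero_of_card_pow_lt_card K s
    (by rw [hs, Nat.card_zmod]; lia)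
  obtain ⟨d, hud, hwd⟩ := exists_apply_eq_zero_and_apply_eq_zero hzero hu hw (a := a)
    fun i hia => or_iff_not_imp_left.mpr fun hui => hws i ((mem_s i).mpr ⟨hia, hui⟩)
  have hds : #(insert d s)ᶜ = 3 := by
    rw [Finset.card_compl, Finset.card_insert_of_notMem (by simp [mem_s, hud]), hs]
    rfl
  have hsupp : ({i | w i ≠ 0} : Finset (Fin 6)) = (insert d s)ᶜ := by
    refine Finset.eq_of_subset_of_card_le (fun i hi => ?_) (hds.trans_le (hwt w hw hw0))
    have hwi : w i ≠ 0 := by simpa using hi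
    rw [Finset.mem_compl, Finset.mem_insert, not_or]
    exact ⟨fun h => hwi (h ▸ hwd), fun h => hwi (hws i h)⟩
  refine ⟨w, hw, (congrArg card hsupp).trans hds, d, hud, fun i => ?_⟩
  have hwi : w i ≠ 0 ↔ ¬(i = d ∨ i ≠ a ∧ u i ≠ 0) := by
    simpa [mem_s] using Finset.ext_iff.mp hsupp i
  grind

lemma exists_mem_eq_ite_of_hammingNorm_eq_three (hcard : 27 ≤ Nat.card K)
    (hsum : ∀ u ∈ K, ∑ i, u i = 0) (hwt : ∀ u ∈ K, u ≠ 0 → 3 ≤ hammingNorm u)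
    (hzero : ∀ u ∈ K, ∃ i, u i = 0) {u : Fin 6 → ZMod 3} (hu : u ∈ K) (hu3 : hammingNorm u = 3)
    {a : Fin 6} (ha : u a ≠ 0) :
    ∃ w ∈ K, ∃ d, u d = 0 ∧ ∀ i, w i = if i = a ∨ u i = 0 ∧ i ≠ d then u a else 0 := by
  obtain ⟨w, hw, hw3, d, hud, hwi⟩ :=
    exists_mem_apply_ne_zero_iff_of_hammingNorm_eq_three hcard hwt hzero hu hu3 ha
  have hwa : w a ≠ 0 := (hwi a).mpr (.inl rfl)
  have hwc : ∀ i, w i = if i = a ∨ u i = 0 ∧ i ≠ d then w a else 0 := by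
    intro i
    split_ifs with hi
    · exact apply_eq_apply_of_hammingNorm_eq_three (hsum w hw) hw3 ((hwi i).mpr hi) hwa
    · exact not_ne_iff.mp (mt (hwi i).mp hi)
  have eq_or_eq_neg : ∀ x y : ZMod 3, x ≠ 0 → y ≠ 0 → x = y ∨ x = -y := by decide
  rcases eq_or_eq_neg _ _ ha hwa with h | h
  · exact ⟨w, hw, d, hud, by rwa [h]⟩
  · refine ⟨-w, K.neg_mem hw, d, hud, fun i => ?_⟩
    rw [Pi.neg_apply, hwc i, h]
    split_ifs <;> simp

lemma exists_forall_ne_zero_of_hammingNorm_eq_three (hcard : 27 ≤ Nat.card K)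
    (hsum : ∀ u ∈ K, ∑ i, u i = 0) (hwt : ∀ u ∈ K, u ≠ 0 → 3 ≤ hammingNorm u)
    {u : Fin 6 → ZMod 3} (hu : u ∈ K) (hu3 : hammingNorm u = 3) :
    ∃ v ∈ K, ∀ i, v i ≠ 0 := by
  by_contra! hzero
  have hconst {i j} (hi : u i ≠ 0) (hj : u j ≠ 0) : u i = u j :=
    apply_eq_apply_of_hammingNorm_eq_three (hsum u hu) hu3 hi hj
  obtain ⟨a, ha, b, hb, hab⟩ : ∃ a, u a ≠ 0 ∧ ∃ b, u b ≠ 0 ∧ a ≠ b := by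
    have hlt : 1 < #{i | u i ≠ 0} := by
      change 1 < hammingNorm u
      lia
    simpa using Finset.one_lt_card.mp hlt
  obtain ⟨x, hx, d, hud, hxi⟩ :=
    exists_mem_eq_ite_of_hammingNorm_eq_three hcard hsum hwt hzero hu hu3 ha
  obtain ⟨y, hy, e, hue, hyi⟩ :=
    exists_mem_eq_ite_of_hammingNorm_eq_three hcard hsum hwt hzero hu hu3 hb
  rw [hconst hb ha] at hyi
  by_cases hde : d = e
  · subst hde
    have hne : x - y ≠ 0 := fun h => ha (by simpa [hxi, hyi, hab, ha] using congrFun h a)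
    have hle : hammingNorm (x - y) ≤ #{a, b} := by
      refine Finset.card_le_card fun i hi => ?_
      contrapose! hi
      simp_all
    exact (hwt _ (K.sub_mem hx hy) hne).not_gt
      (hle.trans_lt (Finset.card_le_two.trans_lt (by decide)))
  -- Every coordinate of `u + x + y` is `u a` or `2 * u a`.
  · obtain ⟨i, hi⟩ := hzero _ (K.add_mem (K.add_mem hu hx) hy)
    by_cases hui : u i = 0
    · have hia : i ≠ a := fun h => ha (h ▸ hui)
      have hib : i ≠ b := fun h => hb (h ▸ hui)
      simp only [Pi.add_apply, hxi, hyi, hui, hia, hib] at hi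
      grind
    · simp only [Pi.add_apply, hxi, hyi, hconst hui ha] at hi
      grind

lemma exists_mem_apply_eq_zero_iff_of_four_le_hammingNorm (hcard : 27 ≤ Nat.card K)
    (hwt : ∀ u ∈ K, u ≠ 0 → 4 ≤ hammingNorm u) {i j : Fin 6} (hij : i ≠ j) :
    ∃ u ∈ K, ∀ k, u k = 0 ↔ k = i ∨ k = j := by
  obtain ⟨u, hu, hu0, huij⟩ := exists_ne_zero_of_card_pow_lt_card K {i, j}
    (by rw [Finset.card_pair hij, Nat.card_zmod]; lia)
  have hzeros : {i, j} = ({k | u k ≠ 0} : Finset (Fin 6))ᶜ := by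
    refine Finset.eq_of_subset_of_card_le (fun k hk => by simp [huij k hk]) ?_
    rw [Finset.card_compl, Finset.card_pair hij, Fintype.card_fin]
    exact Nat.sub_le_sub_left (hwt u hu hu0) 6
  refine ⟨u, hu, fun k => ?_⟩
  simpa using (Finset.ext_iff.mp hzeros k).symm

lemma exists_forall_ne_zero_of_four_le_hammingNorm (hcard : 27 ≤ Nat.card K)
    (hsum : ∀ u ∈ K, ∑ i, u i = 0) (hwt : ∀ u ∈ K, u ≠ 0 → 4 ≤ hammingNorm u) :
    ∃ v ∈ K, ∀ i, v i ≠ 0 := by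
  by_contra! hzero
  obtain ⟨x, hx, hx0⟩ := exists_mem_apply_eq_zero_iff_of_four_le_hammingNorm hcard hwt
    (show (0 : Fin 6) ≠ 1 by decide)
  obtain ⟨y, hy, hy0⟩ := exists_mem_apply_eq_zero_iff_of_four_le_hammingNorm hcard hwt
    (show (2 : Fin 6) ≠ 3 by decide)
  obtain ⟨z, hz, hz0⟩ := exists_mem_apply_eq_zero_iff_of_four_le_hammingNorm hcard hwt
    (show (4 : Fin 6) ≠ 5 by decide)
  have hxy : x 4 * x 5 * (y 4 * y 5) = -1 := mul_mul_mul_eq_neg_one_of_exists_apply_eq_zero hzero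
    hx hy (by simp only [ne_eq, hx0, hy0]; decide) (by simp only [ne_eq, hx0, hy0]; decide)
  have hxz : x 2 * x 3 * (z 2 * z 3) = -1 := mul_mul_mul_eq_neg_one_of_exists_apply_eq_zero hzero
    hx hz (by simp only [ne_eq, hx0, hz0]; decide) (by simp only [ne_eq, hx0, hz0]; decide)
  have hyz : y 0 * y 1 * (z 0 * z 1) = -1 := mul_mul_mul_eq_neg_one_of_exists_apply_eq_zero hzero
    hy hz (by simp only [ne_eq, hy0, hz0]; decide) (by simp only [ne_eq, hy0, hz0]; decide)
  have mul_eq_mul : ∀ a b c d : ZMod 3, a * b * (c * d) ≠ 0 → a + b + c + d = 0 →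
      a * b = c * d := by decide
  have hxx : x 2 * x 3 = x 4 * x 5 := mul_eq_mul _ _ _ _ (by simp [hx0])
    (by simpa [Fin.sum_univ_six, (hx0 0).mpr, (hx0 1).mpr] using hsum x hx)
  have hyy : y 0 * y 1 = y 4 * y 5 := mul_eq_mul _ _ _ _ (by simp [hy0])
    (by simpa [Fin.sum_univ_six, (hy0 2).mpr, (hy0 3).mpr] using hsum y hy)
  have hzz : z 0 * z 1 = z 2 * z 3 := mul_eq_mul _ _ _ _ (by simp [hz0])
    (by simpa [Fin.sum_univ_six, (hz0 4).mpr, (hz0 5).mpr] using hsum z hz)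
  rw [hxx] at hxz
  rw [hyy, hzz] at hyz
  have not_sq : ∀ t : ZMod 3, t ^ 2 ≠ -1 := by decide
  refine not_sq (x 4 * x 5 * (y 4 * y 5) * (z 2 * z 3)) ?_
  calc (x 4 * x 5 * (y 4 * y 5) * (z 2 * z 3)) ^ 2
      = x 4 * x 5 * (y 4 * y 5) * (x 4 * x 5 * (z 2 * z 3)) * (y 4 * y 5 * (z 2 * z 3)) := by ring
    _ = -1 := by rw [hxy, hxz, hyz]; rfl

theorem exists_forall_ne_zero_of_three_le_hammingNorm (hcard : 27 ≤ Nat.card K)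
    (hsum : ∀ u ∈ K, ∑ i, u i = 0) (hwt : ∀ u ∈ K, u ≠ 0 → 3 ≤ hammingNorm u) :
    ∃ v ∈ K, ∀ i, v i ≠ 0 := by
  by_cases h3 : ∃ u ∈ K, hammingNorm u = 3
  · obtain ⟨u, hu, hu3⟩ := h3
    exact exists_forall_ne_zero_of_hammingNorm_eq_three hcard hsum hwt hu hu3
  · push Not at h3
    exact exists_forall_ne_zero_of_four_le_hammingNorm hcard hsum fun u hu hu0 =>
      (hwt u hu hu0).lt_of_ne (h3 u hu).symm

end TernaryCode

theorem not_dissociated_of_card_le {G : Type*} [AddCommGroup G] [Finite G]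
    (hcard : Nat.card G ≤ 81) {φ : ZMod 3 →+ G} (hφ : Function.Injective φ)
    (hG : ∀ x : G, 3 • x ∈ φ.range) (g : Fin 6 → G) : ¬ Dissociated g := by
  intro hd
  choose ε hε using fun i => hG (g i)
  have hε0 : ∀ i, ε i ≠ 0 := by
    intro i hi
    have hle := hd.three_mul_two_pow_le_card (i := i) (by rw [← hε, hi, map_zero])
    exact absurd (hle.trans hcard) (by decide)
  have hd' := hd.valMinAbs_smul hε0
  have hg : ∀ i, 3 • (ε i).valMinAbs • g i = φ 1 := by
    intro i
    have valMinAbs_smul_self : ∀ t : ZMod 3, t ≠ 0 → t.valMinAbs • t = 1 := by decide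
    rw [smul_comm, ← hε, ← map_zsmul, valMinAbs_smul_self _ (hε0 i)]
  have hK : 27 ≤ Nat.card (relations hg) := by
    have hle := three_pow_le_card_relations hg hφ
    rw [Fintype.card_fin] at hle
    nlinarith
  obtain ⟨u, hu, hfull⟩ := exists_forall_ne_zero_of_three_le_hammingNorm hK
    (fun u hu => sum_eq_zero_of_mem_relations hg hφ hu) fun u hu hu0 =>
      (Nat.pow_le_pow_iff_right (a := 3) (by norm_num)).mp
        (hK.trans (hd'.card_relations_le_three_pow hg hu hu0))
  obtain ⟨i, hi⟩ := hd'.exists_apply_eq_zero hg hφ (by lia) hu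
  exact hfull i hi

lemma dissociated_five :
    Dissociated ![((1, 0, 0) : ZMod 3 × ZMod 3 × ZMod 9), (0, 1, 0), (0, 0, 1), (0, 0, 2),
      (0, 0, 4)] := by
  unfold Dissociated signedSum
  decide +kernel

/-- The embedding `t ↦ (0, 0, 3 t)` of `C₃` onto `3G` for `G = C₃ ⊕ C₃ ⊕ C₉`. -/
def tripleHom : ZMod 3 →+ ZMod 3 × ZMod 3 × ZMod 9 where
  toFun t := (0, 0, 3 * t.val)
  map_zero' := by decide
  map_add' := by decide

lemma tripleHom_injective : Function.Injective tripleHom := by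
  unfold Function.Injective
  decide

lemma three_smul_mem_range_tripleHom (x : ZMod 3 × ZMod 3 × ZMod 9) :
    3 • x ∈ tripleHom.range := by
  refine ⟨x.2.2.val, ?_⟩
  decide +revert

theorem stmt14 : Davpm (ZMod 3 × ZMod 3 × ZMod 9) = 6 :=
  davpm_eq_of_dissociated dissociated_five <|
    not_dissociated_of_card_le (by simp) tripleHom_injective three_smul_mem_range_tripleHom
end
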